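/- Let G_1 and G_2 be two vertex-disjoint 2-edge-colored graphs with Hamiltonian alternating cycles C_1 = x_0 x_1 ⋯ x_{2n−1} x_0 and C_2 = y_0 y_1 ⋯ y_{2m−1} y_0 respectively, and let G ∈ G_1 ⊕ G_2. If there is no good pair in G, and for each i ∈ {1,2} there is a vertex of C_i that is non-singular with respect to C_{3−i}, then there exist r ∈ [0, 2m−1] and s ∈ [0, 2n−1] such that x_0 y_r y_{r+1} y_{r+2} x_0 and y_0 x_s x_{s+1} x_{s+2} y_0 are alternating 4-cycles in G (subscripts modulo 2m and 2n respectively). -/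

import Mathlib

/-- An alternating cycle of length `N` in the 2-edge-colored graph `(G, c)`
(colors: `true` = red, `false` = blue). -/
def IsAltCycle {V : Type*} (G : SimpleGraph V) (c : Sym2 V → Bool) {N : ℕ}
    (x : ZMod N → V) : Prop :=
  Function.Injective x ∧ (∀ i, G.Adj (x i) (x (i + 1))) ∧
    ∀ i, c s(x i, x (i + 1)) ≠ c s(x (i + 1), x (i + 2))

/-- There is a good pair of edges between the two vertex-disjoint alternating
cycles `x` and `y`. -/
def HasGoodPair {V : Type*} (G : SimpleGraph V) (c : Sym2 V → Bool) {N M : ℕ}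
    (x : ZMod N → V) (y : ZMod M → V) : Prop :=
  ∃ (s s' : ZMod N) (t t' : ZMod M),
    (s' = s - 1 ∨ s' = s + 1) ∧ (t' = t - 1 ∨ t' = t + 1) ∧
    G.Adj (x s) (y t) ∧ G.Adj (x s') (y t') ∧
    c s(x s, x s') = c s(x s, y t) ∧
    c s(x s', y t') = c s(x s, y t) ∧
    c s(y t', y t) = c s(x s, y t)

/-- `G` is a colored generalized sum `G ∈ G₁ ⊕ G₂` of two vertex-disjoint 2-edge-colored
graphs `G₁`, `G₂` with Hamiltonian alternating cycles `C₁ = x` (of length `2n`) and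
`C₂ = y` (of length `2m`): here `G₁`, `G₂` are the induced colored subgraphs of `G` on
`V(G₁) = range x` and `V(G₂) = range y`, so the conditions are that `x` and `y` are
alternating cycles of `G` with disjoint ranges covering `V(G)` (Hamiltonicity of `Cᵢ`
in `Gᵢ`), and between any two vertices of different parts there is exactly one
(arbitrarily colored) edge of `G`. -/
def IsCGSHam {V : Type*} (G : SimpleGraph V) (c : Sym2 V → Bool) {n m : ℕ}
    (x : ZMod (2 * n) → V) (y : ZMod (2 * m) → V) : Prop :=
  IsAltCycle G c x ∧ IsAltCycle G c y ∧
  Disjoint (Set.range x) (Set.range y) ∧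
  (∀ v : V, v ∈ Set.range x ∪ Set.range y) ∧
  (∀ (i : ZMod (2 * n)) (j : ZMod (2 * m)), G.Adj (x i) (y j))

/-- The set of exterior edges of a colored generalized sum with parts `range x` and
`range y`: the edges joining the two parts. -/
def extEdges {V : Type*} {N M : ℕ} (x : ZMod N → V) (y : ZMod M → V) : Set (Sym2 V) :=
  {e | ∃ i j, e = s(x i, y j)}

/-- The number of red exterior edges incident with `v`. -/
noncomputable def dred {V : Type*} (c : Sym2 V → Bool) {N M : ℕ}
    (x : ZMod N → V) (y : ZMod M → V) (v : V) : ℕ :=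
  {e : Sym2 V | e ∈ extEdges x y ∧ v ∈ e ∧ c e = true}.ncard

/-- The number of blue exterior edges incident with `v`. -/
noncomputable def dblue {V : Type*} (c : Sym2 V → Bool) {N M : ℕ}
    (x : ZMod N → V) (y : ZMod M → V) (v : V) : ℕ :=
  {e : Sym2 V | e ∈ extEdges x y ∧ v ∈ e ∧ c e = false}.ncard

/-- The vertex `x i` of `C₁` is singular with respect to `C₂`: the set of edges from
`x i` to `V(C₂)` (in a colored generalized sum these are all pairs `x i - y j`) is
nonempty and they all have the same color. -/
def SingularX {V : Type*} (c : Sym2 V → Bool) {N M : ℕ}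
    (x : ZMod N → V) (y : ZMod M → V) (i : ZMod N) : Prop :=
  (∃ _j : ZMod M, True) ∧ ∀ j j' : ZMod M, c s(x i, y j) = c s(x i, y j')

/-- The vertex `y j` of `C₂` is singular with respect to `C₁`. -/
def SingularY {V : Type*} (c : Sym2 V → Bool) {N M : ℕ}
    (x : ZMod N → V) (y : ZMod M → V) (j : ZMod M) : Prop :=
  (∃ _i : ZMod N, True) ∧ ∀ i i' : ZMod N, c s(x i, y j) = c s(x i', y j)

/-!
Record the colors, taken modulo 2, by `a i = c(xᵢ xᵢ₊₁)`, `b j = c(yⱼ yⱼ₊₁)` and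
`A i j = c(xᵢ yⱼ)`. If no alternating 4-cycle `xᵢ yᵣ yᵣ₊₁ yᵣ₊₂ xᵢ` exists, then the positions `j`
with `A i j ≠ b j` are closed under `j ↦ j + 2`, so going around `C₂` shows that `A i j` depends
only on the color `b j`. The absence of good pairs carries such a pattern from one row of `A` to all
the others: for each value `s` of `a i + b j`, being equal to `a i` on the entries of class `s`
propagates to the next row, and being different from `a i` propagates to the previous row. Hence
`A i j + a i` is a function of `a i + b j` alone, and each of the four possible functions makes all
rows of `A` constant or all columns of `A` constant.
-/

/-- A cyclic sequence of colors in which consecutive entries differ. -/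
def IsAlternating {N : ℕ} (a : ZMod N → Bool) : Prop :=
  ∀ i, a (i + 1) = !a i

/-- The color pattern of two alternating cycles without good pairs: `a i` is the color of
`x i — x (i + 1)`, `b j` that of `y j — y (j + 1)`, and `A i j` that of `x i — y j`. The last
two fields are the two ways to join edges of the cycles of equal color into a 4-cycle. -/
structure IsGoodPairFree {N M : ℕ} (a : ZMod N → Bool) (b : ZMod M → Bool)
    (A : ZMod N → ZMod M → Bool) : Prop where
  left : IsAlternating a
  right : IsAlternating b
  parallel : ∀ i j, a i = b j → A i j = a i → A (i + 1) (j + 1) ≠ a i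
  crossed : ∀ i j, a i = b j → A i (j + 1) = a i → A (i + 1) j ≠ a i

/-- The color condition for `v₀ v₁ v₂ v₃ v₀` to be an alternating 4-cycle; adjacency and
distinctness of the vertices are not part of it. -/
def IsAltFourCycle {V : Type*} (c : Sym2 V → Bool) (v₀ v₁ v₂ v₃ : V) : Prop :=
  c s(v₀, v₁) ≠ c s(v₁, v₂) ∧ c s(v₁, v₂) ≠ c s(v₂, v₃) ∧
    c s(v₂, v₃) ≠ c s(v₃, v₀) ∧ c s(v₃, v₀) ≠ c s(v₀, v₁)

section Cyclic

variable {N : ℕ} {P : ZMod N → Prop}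

theorem forall_zmod_of_add_one [NeZero N] (i₀ : ZMod N) (base : P i₀)
    (step : ∀ i, P i → P (i + 1)) : ∀ i, P i := by
  have shifted (k : ℕ) : P (i₀ + k) := by
    induction k with
    | zero => simpa using base
    | succ k ih => simpa [add_assoc] using step _ ih
  intro i
  simpa using shifted (i - i₀).val

theorem forall_zmod_of_sub_one [NeZero N] (i₀ : ZMod N) (base : P i₀)
    (step : ∀ i, P (i + 1) → P i) : ∀ i, P i := by
  intro i
  have reflected := forall_zmod_of_add_one (P := fun i => P (-i)) (-i₀) (by simpa using base)
    (fun i hi => step _ (by simpa using hi))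
  simpa using reflected (-i)

namespace IsAlternating

variable {b : ZMod N → Bool}

theorem apply_sub_one (hb : IsAlternating b) (j : ZMod N) : b (j - 1) = !b j := by
  have h := hb (j - 1)
  rw [sub_add_cancel] at h
  rw [h, Bool.not_not]

theorem apply_add_two (hb : IsAlternating b) (j : ZMod N) : b (j + 2) = b j := by
  rw [← one_add_one_eq_two, ← add_assoc, hb, hb, Bool.not_not]

theorem forall_of_add_two [NeZero N] (hb : IsAlternating b) {j : ZMod N} (base : P j)
    (step : ∀ i, P i → P (i + 2)) : ∀ k, b k = b j → P k := by
  have key : ∀ k, (b k = b j → P k) ∧ (b k ≠ b j → P (k + 1)) := by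
    refine forall_zmod_of_add_one j ⟨fun _ => base, fun h => absurd rfl h⟩ ?_
    rintro i ⟨same, diff⟩
    rw [hb i, add_assoc, one_add_one_eq_two]
    exact ⟨fun h => diff (by simp [← h]), fun h => step i (same (by simpa using h))⟩
  exact fun k => (key k).1

theorem exists_switch [NeZero N] (hb : IsAlternating b) {R : ZMod N → Bool} {j k : ZMod N}
    (hjk : b j = b k) (hR : R j ≠ R k) : ∃ r, R r ≠ b r ∧ R (r + 2) = b r := by
  by_contra! no_switch
  have spread {j : ZMod N} (hj : R j ≠ b j) : ∀ k, b k = b j → R k ≠ b k :=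
    hb.forall_of_add_two (P := fun i => R i ≠ b i) hj fun i hi => by
      rw [hb.apply_add_two]
      exact no_switch i hi
  by_cases hj : R j = b j
  · have hk : R k = b k := by_contra fun hk => spread hk j hjk hj
    exact hR (by rw [hj, hk, hjk])
  · have hk : R k ≠ b k := spread hj k hjk.symm
    exact hR (by rw [Bool.eq_not.2 hj, Bool.eq_not.2 hk, hjk])

end IsAlternating

end Cyclic

namespace IsGoodPairFree

variable {N M : ℕ} {a : ZMod N → Bool} {b : ZMod M → Bool} {A : ZMod N → ZMod M → Bool}

theorem transpose (h : IsGoodPairFree a b A) : IsGoodPairFree b a fun j i => A i j where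
  left := h.right
  right := h.left
  parallel j i hij hA := by
    rw [hij] at hA ⊢
    exact h.parallel i j hij.symm hA
  crossed j i hij hA hA' := by
    rw [hij] at hA hA'
    exact h.crossed i j hij.symm hA' hA

theorem exists_imp_eq_left_add_one (h : IsGoodPairFree a b A) (i : ZMod N) (j : ZMod M) :
    ∃ k, b k = !b j ∧ (A i k = a i → A (i + 1) j = a (i + 1)) := by
  rw [h.left i, Bool.eq_not]
  by_cases hij : a i = b j
  · exact ⟨j + 1, h.right j, h.crossed i j hij⟩
  · have hb := h.right.apply_sub_one j
    have hij' : a i = b (j - 1) := by rw [hb, Bool.eq_not.2 hij]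
    exact ⟨j - 1, hb, by simpa only [sub_add_cancel] using h.parallel i (j - 1) hij'⟩

theorem exists_imp_ne_left_of_add_one (h : IsGoodPairFree a b A) (i : ZMod N) (j : ZMod M) :
    ∃ k, b k = !b j ∧ (A (i + 1) k ≠ a (i + 1) → A i j ≠ a i) := by
  simp only [h.left i, Bool.ne_not]
  by_cases hij : a i = b j
  · exact ⟨j + 1, h.right j, fun hk hj => h.parallel i j hij hj hk⟩
  · have hb := h.right.apply_sub_one j
    have hij' : a i = b (j - 1) := by rw [hb, Bool.eq_not.2 hij]
    exact ⟨j - 1, hb, fun hk hj => h.crossed i (j - 1) hij' (by rwa [sub_add_cancel]) hk⟩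

variable [NeZero N] {i₀ : ZMod N} {s : Bool}

theorem eq_left_of_row (h : IsGoodPairFree a b A)
    (row : ∀ j, (a i₀ ^^ b j) = s → A i₀ j = a i₀) :
    ∀ i j, (a i ^^ b j) = s → A i j = a i := by
  refine forall_zmod_of_add_one i₀ row fun i hi j hj => ?_
  obtain ⟨k, hk, forward⟩ := h.exists_imp_eq_left_add_one i j
  exact forward (hi k (by simpa [hk, h.left i] using hj))

theorem ne_left_of_row (h : IsGoodPairFree a b A)
    (row : ∀ j, (a i₀ ^^ b j) = s → A i₀ j ≠ a i₀) :
    ∀ i j, (a i ^^ b j) = s → A i j ≠ a i := by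
  refine forall_zmod_of_sub_one i₀ row fun i hi j hj => ?_
  obtain ⟨k, hk, backward⟩ := h.exists_imp_ne_left_of_add_one i j
  exact backward (hi k (by simpa [hk, h.left i] using hj))

theorem exists_eq_left_xor (h : IsGoodPairFree a b A)
    (row : ∀ j k, b j = b k → A i₀ j = A i₀ k) :
    ∃ f : Bool → Bool, ∀ i j, A i j = (a i ^^ f (a i ^^ b j)) := by
  have const_on_class (s : Bool) : ∃ t, ∀ i j, (a i ^^ b j) = s → A i j = (a i ^^ t) := by
    by_cases agree : ∀ j, (a i₀ ^^ b j) = s → A i₀ j = a i₀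
    · exact ⟨false, by simpa only [Bool.xor_false] using h.eq_left_of_row agree⟩
    · push Not at agree
      obtain ⟨k, hk, hne⟩ := agree
      have disagree (j : ZMod M) (hj : (a i₀ ^^ b j) = s) : A i₀ j ≠ a i₀ := by
        rwa [row j k (Bool.xor_right_inj.1 (hj.trans hk.symm))]
      exact ⟨true, by
        simpa only [Bool.xor_true, Bool.eq_not] using h.ne_left_of_row disagree⟩
  choose f hf using const_on_class
  exact ⟨f, fun i j => hf _ i j rfl⟩

theorem exists_switch [NeZero M] (h : IsGoodPairFree a b A)
    (hrow : ∃ i j j', A i j ≠ A i j') (hcol : ∃ j i i', A i j ≠ A i' j) (i₀ : ZMod N) :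
    ∃ r, A i₀ r ≠ b r ∧ A i₀ (r + 2) = b r := by
  by_contra no_switch
  obtain ⟨f, hf⟩ := h.exists_eq_left_xor (i₀ := i₀) fun j k hjk =>
    by_contra fun hne => no_switch (h.right.exists_switch hjk hne)
  by_cases hconst : f true = f false
  · obtain ⟨i, j, j', hne⟩ := hrow
    have rows (j : ZMod M) : A i j = (a i ^^ f false) := by
      rw [hf]
      cases a i ^^ b j <;> simp only [hconst]
    exact hne (by rw [rows, rows])
  · obtain ⟨j, i, i', hne⟩ := hcol
    have columns (i : ZMod N) : A i j = (b j ^^ f false) := by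
      have f_apply (s : Bool) : f s = (s ^^ f false) := by
        cases s
        · simp
        · simpa [Bool.eq_not] using hconst
      rw [hf, f_apply, ← Bool.xor_assoc, ← Bool.xor_assoc, Bool.xor_self, Bool.false_xor]
    exact hne (by rw [columns, columns])

end IsGoodPairFree

section ColoredGraph

variable {V : Type*} {G : SimpleGraph V} {c : Sym2 V → Bool} {N M : ℕ} {x : ZMod N → V}
  {y : ZMod M → V}

theorem isAlternating_edge_colors (hx : ∀ i, c s(x i, x (i + 1)) ≠ c s(x (i + 1), x (i + 2))) :
    IsAlternating fun i => c s(x i, x (i + 1)) := fun i => by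
  simpa only [add_assoc, one_add_one_eq_two] using Bool.eq_not.2 (hx i).symm

theorem isGoodPairFree_edge_colors
    (hx : ∀ i, c s(x i, x (i + 1)) ≠ c s(x (i + 1), x (i + 2)))
    (hy : ∀ j, c s(y j, y (j + 1)) ≠ c s(y (j + 1), y (j + 2)))
    (hadj : ∀ i j, G.Adj (x i) (y j)) (hgp : ¬ HasGoodPair G c x y) :
    IsGoodPairFree (fun i => c s(x i, x (i + 1))) (fun j => c s(y j, y (j + 1)))
      fun i j => c s(x i, y j) where
  left := isAlternating_edge_colors hx
  right := isAlternating_edge_colors hy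
  parallel i j hij hA hA' :=
    hgp ⟨i, i + 1, j, j + 1, .inr rfl, .inr rfl, hadj _ _, hadj _ _, hA.symm,
      hA'.trans hA.symm, by rw [Sym2.eq_swap, ← hij, hA]⟩
  crossed i j hij hA hA' :=
    hgp ⟨i, i + 1, j + 1, j, .inr rfl, .inl (add_sub_cancel_right j 1).symm, hadj _ _, hadj _ _,
      hA.symm, hA'.trans hA.symm, by rw [← hij, hA]⟩

theorem isAltFourCycle_of_eq_opposite {v₀ v₁ v₂ v₃ : V} (h₀₁ : c s(v₀, v₁) ≠ c s(v₁, v₂))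
    (h₁₂ : c s(v₁, v₂) ≠ c s(v₂, v₃)) (h₀₃ : c s(v₀, v₃) = c s(v₁, v₂)) :
    IsAltFourCycle c v₀ v₁ v₂ v₃ := by
  rw [IsAltFourCycle, Sym2.eq_swap (a := v₃), h₀₃]
  exact ⟨h₀₁, h₁₂, h₁₂.symm, h₀₁.symm⟩

theorem exists_ne_of_not_singularX [NeZero M] {i : ZMod N} (hi : ¬ SingularX c x y i) :
    ∃ j j', c s(x i, y j) ≠ c s(x i, y j') := by
  by_contra! hconst
  exact hi ⟨⟨0, trivial⟩, hconst⟩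

theorem exists_ne_of_not_singularY [NeZero N] {j : ZMod M} (hj : ¬ SingularY c x y j) :
    ∃ i i', c s(x i, y j) ≠ c s(x i', y j) := by
  by_contra! hconst
  exact hj ⟨⟨0, trivial⟩, hconst⟩

theorem alternating_four_cycles_exist_general [NeZero N] [NeZero M]
    (hx : ∀ i, c s(x i, x (i + 1)) ≠ c s(x (i + 1), x (i + 2)))
    (hy : ∀ j, c s(y j, y (j + 1)) ≠ c s(y (j + 1), y (j + 2)))
    (hadj : ∀ i j, G.Adj (x i) (y j)) (hgp : ¬ HasGoodPair G c x y)
    (hns1 : ∃ i, ¬ SingularX c x y i) (hns2 : ∃ j, ¬ SingularY c x y j)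
    (i : ZMod N) (j : ZMod M) :
    (∃ r, IsAltFourCycle c (x i) (y r) (y (r + 1)) (y (r + 2))) ∧
      ∃ s, IsAltFourCycle c (y j) (x s) (x (s + 1)) (x (s + 2)) := by
  have hfree := isGoodPairFree_edge_colors hx hy hadj hgp
  have hrow := hns1.imp fun _ => exists_ne_of_not_singularX
  have hcol := hns2.imp fun _ => exists_ne_of_not_singularY
  obtain ⟨r, hr_ne, hr_eq⟩ := hfree.exists_switch hrow hcol i
  obtain ⟨s, hs_ne, hs_eq⟩ := hfree.transpose.exists_switch hcol hrow j
  rw [Sym2.eq_swap] at hs_ne hs_eq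
  exact ⟨⟨r, isAltFourCycle_of_eq_opposite hr_ne (hy r) hr_eq⟩,
    ⟨s, isAltFourCycle_of_eq_opposite hs_ne (hx s) hs_eq⟩⟩

end ColoredGraph

/-- Let `G ∈ G₁ ⊕ G₂` where `G₁`, `G₂` have Hamiltonian alternating
cycles `C₁ = x` (length `2n`), `C₂ = y` (length `2m`). If `G` has no good pair and each
`Cᵢ` has a vertex that is non-singular with respect to `C_{3-i}`, then there exist
`r` and `s` such that `x 0, y r, y (r+1), y (r+2), x 0` and
`y 0, x s, x (s+1), x (s+2), y 0` are alternating 4-cycles of `G`. -/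
theorem alternating_four_cycles_exist {V : Type*} (G : SimpleGraph V) (c : Sym2 V → Bool)
    {n m : ℕ} (hn : 0 < n) (hm : 0 < m)
    (x : ZMod (2 * n) → V) (y : ZMod (2 * m) → V)
    (hG : IsCGSHam G c x y) (hgp : ¬ HasGoodPair G c x y)
    (hns1 : ∃ i, ¬ SingularX c x y i) (hns2 : ∃ j, ¬ SingularY c x y j) :
    (∃ r : ZMod (2 * m),
      c s(x 0, y r) ≠ c s(y r, y (r + 1)) ∧
      c s(y r, y (r + 1)) ≠ c s(y (r + 1), y (r + 2)) ∧
      c s(y (r + 1), y (r + 2)) ≠ c s(y (r + 2), x 0) ∧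
      c s(y (r + 2), x 0) ≠ c s(x 0, y r)) ∧
    (∃ s : ZMod (2 * n),
      c s(y 0, x s) ≠ c s(x s, x (s + 1)) ∧
      c s(x s, x (s + 1)) ≠ c s(x (s + 1), x (s + 2)) ∧
      c s(x (s + 1), x (s + 2)) ≠ c s(x (s + 2), y 0) ∧
      c s(x (s + 2), y 0) ≠ c s(y 0, x s)) := by
  obtain ⟨⟨-, -, hx⟩, ⟨-, -, hy⟩, -, -, hadj⟩ := hG
  have : NeZero (2 * n) := ⟨by omega⟩
  have : NeZero (2 * m) := ⟨by omega⟩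
  exact alternating_four_cycles_exist_general hx hy hadj hgp hns1 hns2 0 0
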